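/- arXiv:1501.04817 — 4 statements merged into one kernel-verified Lean document; each statement's English description precedes it below -/
import Mathlib

section
/- Let Φ ∈ ℝ^{m×n} have restricted isometry constant δ_{K+1} < 1/(√K + 1), let x ∈ ℝ^n be K-sparse with support T = supp(x), |T| = K ≥ 1, and let y = Φx + v with v ≠ 0. If √SNR > 2√K(1 + δ_{K+1}) / ((1 − (√K + 1)δ_{K+1}) · √MAR), then every run of OMP applied to (Φ, y) satisfies T^K = T, i.e., OMP exactly recovers the support of x in K iterations. -/
noncomputable section
open Finset

/-- `Vec n` is `ℝ^n` with the Euclidean (ℓ²) norm. -/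
abbrev Vec (n : ℕ) := EuclideanSpace ℝ (Fin n)

/-- The standard inner product `⟨u, v⟩ = ∑ i, u i * v i`. -/
def dot {n : ℕ} (u v : Vec n) : ℝ := ∑ i, u i * v i

/-- The `j`-th column of a matrix, as a Euclidean vector. -/
def col {m n : ℕ} (Φ : Matrix (Fin m) (Fin n) ℝ) (j : Fin n) : Vec m :=
  WithLp.toLp 2 fun i => Φ i j

/-- Matrix-vector multiplication `Φ x`, valued in Euclidean space. -/
def mulVec' {m n : ℕ} (Φ : Matrix (Fin m) (Fin n) ℝ) (x : Vec n) : Vec m :=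
  WithLp.toLp 2 fun i => ∑ j, Φ i j * x j

/-- The support of a vector, as a `Finset`. -/
def suppF {n : ℕ} (x : Vec n) : Finset (Fin n) :=
  Finset.univ.filter fun i => x i ≠ 0

/-- Restriction of a vector to an index set (zero outside the set). -/
def restrict {n : ℕ} (x : Vec n) (S : Finset (Fin n)) : Vec n :=
  WithLp.toLp 2 fun i => if i ∈ S then x i else 0

/-- `RIPConst Φ L δ` : δ is the restricted isometry constant of `Φ` of order `L`,
i.e. the smallest `c ≥ 0` such that `(1-c)‖u‖² ≤ ‖Φu‖² ≤ (1+c)‖u‖²` for all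
`L`-sparse `u`. -/
def RIPConst {m n : ℕ} (Φ : Matrix (Fin m) (Fin n) ℝ) (L : ℕ) (δ : ℝ) : Prop :=
  IsLeast {c : ℝ | 0 ≤ c ∧ ∀ u : Vec n, (suppF u).card ≤ L →
    (1 - c) * ‖u‖ ^ 2 ≤ ‖mulVec' Φ u‖ ^ 2 ∧ ‖mulVec' Φ u‖ ^ 2 ≤ (1 + c) * ‖u‖ ^ 2} δ

/-- Signal-to-noise ratio `‖Φx‖²/‖v‖²`. -/
def SNR {m n : ℕ} (Φ : Matrix (Fin m) (Fin n) ℝ) (x : Vec n) (v : Vec m) : ℝ :=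
  ‖mulVec' Φ x‖ ^ 2 / ‖v‖ ^ 2

/-- A run of `N` iterations of Orthogonal Matching Pursuit on data `(Φ, y)`:
`idx (k+1) = t^{k+1}` is the index selected at iteration `k+1`, `sets k = T^k`,
`est k = x^k` and `res k = r^k`. -/
structure OMPRun {m n : ℕ} (Φ : Matrix (Fin m) (Fin n) ℝ) (y : Vec m) (N : ℕ) where
  idx : ℕ → Fin n
  sets : ℕ → Finset (Fin n)
  est : ℕ → Vec n
  res : ℕ → Vec m
  sets_zero : sets 0 = ∅
  est_zero : est 0 = 0
  res_zero : res 0 = y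
  idx_not_mem : ∀ k < N, idx (k + 1) ∉ sets k
  idx_max : ∀ k < N, ∀ i : Fin n, i ∉ sets k →
    |dot (col Φ i) (res k)| ≤ |dot (col Φ (idx (k + 1))) (res k)|
  sets_succ : ∀ k < N, sets (k + 1) = insert (idx (k + 1)) (sets k)
  est_supp : ∀ k < N, suppF (est (k + 1)) ⊆ sets (k + 1)
  est_min : ∀ k < N, ∀ u : Vec n, suppF u ⊆ sets (k + 1) →
    ‖y - mulVec' Φ (est (k + 1))‖ ≤ ‖y - mulVec' Φ u‖
  res_succ : ∀ k < N, res (k + 1) = y - mulVec' Φ (est (k + 1))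

/-- The vector `Φᵀ w` restricted to an index set `A` (the vector of correlations
`⟨φ_i, w⟩` for `i ∈ A`, zero outside `A`), as a Euclidean vector. -/
def colDots {m n : ℕ} (Φ : Matrix (Fin m) (Fin n) ℝ) (A : Finset (Fin n)) (w : Vec m) : Vec n :=
  WithLp.toLp 2 fun i => if i ∈ A then dot (col Φ i) w else 0

/-- The vector `Φᵀ w` of all column correlations, as a plain function (so `‖·‖`
is the sup/ℓ∞ norm). -/
def dualVec {m n : ℕ} (Φ : Matrix (Fin m) (Fin n) ℝ) (w : Vec m) : Fin n → ℝ :=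
  fun i => dot (col Φ i) w

/-- `P⊥_S w` : the projection of `w` onto the orthogonal complement of the span
of the columns of `Φ` indexed by `S`. -/
def perpProj {m n : ℕ} (Φ : Matrix (Fin m) (Fin n) ℝ) (S : Finset (Fin n)) (w : Vec m) : Vec m :=
  w - (Submodule.orthogonalProjectionOnto (Submodule.span ℝ (col Φ '' (S : Set (Fin n)))) w : Vec m)

/-- The `j`-th largest value (1-indexed) among `{|x i| : i ∈ Γ}` (with
multiplicities); `0` if `j > |Γ|` or `j = 0`. -/
def kthLargest {n : ℕ} (x : Vec n) (Γ : Finset (Fin n)) (j : ℕ) : ℝ :=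
  if 1 ≤ j ∧ j ≤ Γ.card then
    (Multiset.sort (Γ.val.map fun i => |x i|) (· ≤ ·)).getD (Γ.card - j) 0
  else 0


/-- The matrix as a linear map. -/
def mulLin {m n : ℕ} (Φ : Matrix (Fin m) (Fin n) ℝ) : Vec n →ₗ[ℝ] Vec m where
  toFun := mulVec' Φ
  map_add' a b := by
    ext i
    simp [mulVec', mul_add, Finset.sum_add_distrib]
  map_smul' c a := by
    ext i
    simp [mulVec', Finset.mul_sum, mul_left_comm]

lemma mulLin_apply {m n : ℕ} (Φ : Matrix (Fin m) (Fin n) ℝ) (u : Vec n) :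
    mulVec' Φ u = mulLin Φ u := rfl

lemma dot_eq {n : ℕ} (u v : Vec n) : dot u v = inner ℝ u v := by
  simp [dot, PiLp.inner_apply, mul_comm]

lemma mulLin_single {m n : ℕ} (Φ : Matrix (Fin m) (Fin n) ℝ) (j : Fin n) :
    mulLin Φ (EuclideanSpace.single j 1) = col Φ j := by
  ext i
  simp [← mulLin_apply, mulVec', col, Pi.single_apply]

lemma mulLin_sum {m n : ℕ} (Φ : Matrix (Fin m) (Fin n) ℝ) (u : Vec n) :
    mulLin Φ u = ∑ i, u i • col Φ i := by
  ext i
  simp [← mulLin_apply, mulVec', col, mul_comm]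

/-- vectors supported on `S`. -/
def suppSub {n : ℕ} (S : Finset (Fin n)) : Submodule ℝ (Vec n) where
  carrier := {u | ∀ i, i ∉ S → u i = 0}
  add_mem' {a b} ha hb i hi := by simp [ha i hi, hb i hi]
  zero_mem' i hi := by simp
  smul_mem' c a ha i hi := by simp [ha i hi]

lemma mem_suppSub {n : ℕ} (S : Finset (Fin n)) (u : Vec n) :
    u ∈ suppSub S ↔ ∀ i, i ∉ S → u i = 0 := Iff.rfl

lemma suppF_sub {n : ℕ} (S : Finset (Fin n)) (u : Vec n) :
    suppF u ⊆ S ↔ u ∈ suppSub S := by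
  rw [mem_suppSub]
  constructor
  · intro h i hi
    by_contra hne
    exact hi (h (by simp [suppF, hne]))
  · intro h i hi
    by_contra hne
    simp only [suppF, Finset.mem_filter] at hi
    exact hi.2 (h i hne)

lemma suppSub_mono {n : ℕ} {S S' : Finset (Fin n)} (h : S ⊆ S') : suppSub S ≤ suppSub S' :=
  fun _ hu i hi => hu i (fun h' => hi (h h'))

lemma single_mem {n : ℕ} {S : Finset (Fin n)} {i : Fin n} (h : i ∈ S) :
    (EuclideanSpace.single i (1:ℝ) : Vec n) ∈ suppSub S := by
  intro j hj
  have : j ≠ i := fun e => hj (e ▸ h)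
  simp [this]

lemma exists_proj {m n : ℕ} (Φ : Matrix (Fin m) (Fin n) ℝ) (S : Finset (Fin n)) (v : Vec m) :
    ∃ u ∈ suppSub S, (∀ i ∈ S, inner ℝ (col Φ i) (v - mulLin Φ u) = 0) ∧
      ‖v - mulLin Φ u‖ ≤ ‖v‖ := by
  let W := (suppSub S).map (mulLin Φ)
  obtain ⟨p, hp, q, hq, hpq⟩ := W.exists_add_mem_mem_orthogonal v
  obtain ⟨u, hu, rfl⟩ := hp
  have hq' : v - mulLin Φ u = q := by rw [hpq]; abel
  refine ⟨u, hu, ?_, ?_⟩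
  · intro i hi
    rw [hq']
    exact (Submodule.mem_orthogonal _ _).1 hq _ ⟨_, single_mem hi, mulLin_single Φ i⟩
  · rw [hq']
    have h0 : inner ℝ (mulLin Φ u) q = 0 :=
      (Submodule.mem_orthogonal _ _).1 hq _ ⟨_, hu, rfl⟩
    have := norm_add_sq_real (mulLin Φ u) q
    rw [← hpq, h0] at this
    refine (sq_le_sq₀ (by positivity) (norm_nonneg _)).1 ?_
    nlinarith [sq_nonneg ‖mulLin Φ u‖]

lemma orth_of_min {m : ℕ} (r f : Vec m) (h : ∀ t : ℝ, ‖r‖ ≤ ‖r - t • f‖) :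
    inner ℝ f r = 0 := by
  set c := inner ℝ f r with hc
  set a := ‖f‖ ^ 2 with ha
  have ha0 : 0 ≤ a := sq_nonneg _
  have key : ∀ t : ℝ, 2 * t * c ≤ t ^ 2 * a := by
    intro t
    have h1 := norm_sub_sq_real r (t • f)
    rw [inner_smul_right, real_inner_comm, ← hc, norm_smul, mul_pow, Real.norm_eq_abs, sq_abs,
      ← ha] at h1
    have h2 := pow_le_pow_left₀ (norm_nonneg r) (h t) 2
    linarith
  have h1 := key (c / (a + 1))
  have h2 : 2 * (c / (a+1)) * c * (a+1)^2 ≤ (c / (a+1)) ^ 2 * a * (a+1)^2 :=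
    mul_le_mul_of_nonneg_right h1 (by positivity)
  have h3 : 2 * (c / (a+1)) * c * (a+1)^2 = 2 * c^2 * (a+1) := by field_simp
  have h4 : (c / (a+1)) ^ 2 * a * (a+1)^2 = c^2 * a := by field_simp
  rw [h3, h4] at h2
  have : c ^ 2 = 0 := by nlinarith [sq_nonneg c, mul_nonneg (sq_nonneg c) ha0]
  exact pow_eq_zero_iff (two_ne_zero) |>.1 this

/-- RIP inner product bound. -/
lemma rip_inner {m n K : ℕ} (Φ : Matrix (Fin m) (Fin n) ℝ) (δ : ℝ) (T : Finset (Fin n))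
    (hcard : T.card = K) (hRIP : RIPConst Φ (K + 1) δ) (z : Vec n) (hz : z ∈ suppSub T)
    (hz0 : 0 < ‖z‖) (j : Fin n) (hj : j ∉ T) :
    |inner ℝ (col Φ j) (mulLin Φ z)| ≤ δ * ‖z‖ := by
  have key : ∀ t : ℝ, (1 - δ) * (‖z‖^2 + t^2) ≤ ‖mulLin Φ z‖^2 +
      2 * t * inner ℝ (col Φ j) (mulLin Φ z) + t^2 * ‖col Φ j‖^2 ∧
      ‖mulLin Φ z‖^2 +
      2 * t * inner ℝ (col Φ j) (mulLin Φ z) + t^2 * ‖col Φ j‖^2 ≤ (1+δ) * (‖z‖^2 + t^2) := by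
    intro t
    have hs : suppF (z + t • EuclideanSpace.single j (1:ℝ)) ⊆ insert j T := by
      rw [suppF_sub]
      exact Submodule.add_mem _ (suppSub_mono (Finset.subset_insert _ _) hz)
        (Submodule.smul_mem _ _ (single_mem (Finset.mem_insert_self _ _)))
    have hc := (Finset.card_le_card hs).trans (Finset.card_insert_le _ _)
    rw [hcard] at hc
    have h := hRIP.1.2 _ hc
    rw [mulLin_apply, map_add, map_smul, mulLin_single, norm_add_sq_real, norm_add_sq_real,
      norm_smul, norm_smul, inner_smul_right, inner_smul_right,
      real_inner_comm (col Φ j) (mulLin Φ z),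
      mul_pow, mul_pow, Real.norm_eq_abs, sq_abs] at h
    have e1 : inner ℝ z (EuclideanSpace.single j (1:ℝ)) = 0 := by
      rw [EuclideanSpace.inner_single_right]
      simp [hz j hj]
    have e2 : ‖(EuclideanSpace.single j (1:ℝ) : Vec n)‖ = 1 := by simp
    rw [e1, e2] at h
    constructor <;> [have h := h.1; have h := h.2] <;> linarith
  rw [abs_le]
  have hp := key ‖z‖
  have hm := key (-‖z‖)
  constructor
  · refine le_of_mul_le_mul_left ?_ hz0
    nlinarith [hp.1, hm.2]
  · refine le_of_mul_le_mul_left ?_ hz0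
    nlinarith [hp.2, hm.1]

lemma col_norm {m n K : ℕ} (Φ : Matrix (Fin m) (Fin n) ℝ) (δ : ℝ)
    (hRIP : RIPConst Φ (K + 1) δ) (j : Fin n) : ‖col Φ j‖ ≤ √(1 + δ) := by
  have hs : suppF (EuclideanSpace.single j (1:ℝ)) ⊆ {j} := by
    rw [suppF_sub]
    exact single_mem (by simp)
  have hc := Finset.card_le_card hs
  rw [Finset.card_singleton] at hc
  have h := (hRIP.1.2 _ (hc.trans (by omega))).2
  rw [mulLin_apply, mulLin_single] at h
  apply Real.le_sqrt_of_sq_le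
  simpa using h

/-- One step: correct selection. -/
lemma step {m n K : ℕ} (Φ : Matrix (Fin m) (Fin n) ℝ) (δ μ : ℝ)
    (x e : Vec n) (v r : Vec m) (S T : Finset (Fin n))
    (hx : x ∈ suppSub T) (hcard : T.card = K)
    (hRIP : RIPConst Φ (K + 1) δ) (hδ : 0 < 1 - (√K + 1) * δ) (hμ : 0 < μ)
    (hmin : ∀ i ∈ T, μ ≤ |x i|)
    (hnoise : 2 * √(1 + δ) * ‖v‖ < μ * (1 - (√K + 1) * δ))
    (hST : S ⊂ T) (he : e ∈ suppSub S) (hr : r = mulLin Φ x + v - mulLin Φ e)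
    (hor : ∀ i ∈ S, inner ℝ (col Φ i) r = 0) (j : Fin n)
    (hmax : ∀ i, i ∉ S → |inner ℝ (col Φ i) r| ≤ |inner ℝ (col Φ j) r|) : j ∈ T := by
  by_contra hj
  have hδ0 : 0 ≤ δ := hRIP.1.1
  obtain ⟨u, hu, huo, hun⟩ := exists_proj Φ S v
  set q := v - mulLin Φ u with hq
  set z := x - e + u with hz
  have hzT : z ∈ suppSub T := Submodule.add_mem _ (Submodule.sub_mem _ hx
    (suppSub_mono hST.1 he)) (suppSub_mono hST.1 hu)
  have hrz : r = mulLin Φ z + q := by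
    rw [hr, hz, hq, map_add, map_sub]; abel
  have hzx : ∀ i, i ∉ S → z i = x i := by
    intro i hi
    simp [hz, he i hi, hu i hi]
  set R := T \ S with hR
  have hRne : 0 < R.card := by
    rw [Finset.card_pos, hR, Finset.sdiff_nonempty]
    exact hST.2
  have hRK : R.card ≤ K := hcard ▸ Finset.card_le_card Finset.sdiff_subset
  have hN : √(R.card : ℝ) ≤ √K := Real.sqrt_le_sqrt (by exact_mod_cast hRK)
  have hN0 : 0 < √(R.card : ℝ) := Real.sqrt_pos.2 (by exact_mod_cast hRne)
  have hsumz : ∑ i ∈ R, |z i|^2 ≤ ‖z‖^2 := by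
    rw [EuclideanSpace.real_norm_sq_eq]
    simp only [sq_abs]
    exact Finset.sum_le_sum_of_subset_of_nonneg (Finset.subset_univ _) (fun i _ _ => sq_nonneg _)
  have hzlow : √(R.card : ℝ) * μ ≤ ‖z‖ := by
    refine (sq_le_sq₀ (by positivity) (norm_nonneg _)).1 ?_
    rw [mul_pow, Real.sq_sqrt (by positivity)]
    refine le_trans ?_ hsumz
    have : ∑ i ∈ R, μ^2 ≤ ∑ i ∈ R, |z i|^2 := by
      apply Finset.sum_le_sum
      intro i hi
      rw [hR, Finset.mem_sdiff] at hi
      rw [hzx i hi.2]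
      exact pow_le_pow_left₀ hμ.le (hmin i hi.1) 2
    simpa using this
  have hz0 : 0 < ‖z‖ := lt_of_lt_of_le (by positivity) hzlow
  have hl1 : ∑ i ∈ R, |z i| ≤ √(R.card : ℝ) * ‖z‖ := by
    refine (sq_le_sq₀ (by positivity) (by positivity)).1 ?_
    rw [mul_pow, Real.sq_sqrt (by positivity)]
    exact sq_sum_le_card_mul_sum_sq.trans (mul_le_mul_of_nonneg_left hsumz (by positivity))
  set s := √(1 + δ) with hs
  have hs0 : 0 ≤ s := Real.sqrt_nonneg _
  have hqb : ∀ i, |inner ℝ (col Φ i) q| ≤ s * ‖v‖ := fun i =>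
    (abs_real_inner_le_norm _ _).trans
      (mul_le_mul (col_norm Φ δ hRIP i) hun (norm_nonneg _) hs0)
  set B := δ * ‖z‖ + 2 * s * ‖v‖ with hB
  have hB0 : 0 ≤ B := by positivity
  have hcorr : ∀ i ∈ R, |inner ℝ (col Φ i) (mulLin Φ z)| ≤ B := by
    intro i hi
    rw [hR, Finset.mem_sdiff] at hi
    have h1 := hmax i hi.2
    have h2 := rip_inner Φ δ T hcard hRIP z hzT hz0 j hj
    rw [hrz, inner_add_right, inner_add_right] at h1
    have h3 := abs_add_le (inner ℝ (col Φ j) (mulLin Φ z)) (inner ℝ (col Φ j) q)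
    have h4 := abs_sub_abs_le_abs_sub (inner ℝ (col Φ i) (mulLin Φ z))
      (-(inner ℝ (col Φ i) q))
    rw [sub_neg_eq_add, abs_neg] at h4
    linarith [hqb i, hqb j]
  have hzS : ∀ i, i ∉ R → z i * inner ℝ (col Φ i) (mulLin Φ z) = 0 := by
    intro i hi
    by_cases hiS : i ∈ S
    · have h1 := hor i hiS
      rw [hrz, inner_add_right, huo i hiS, add_zero] at h1
      rw [h1, mul_zero]
    · have : i ∉ T := fun h => hi (Finset.mem_sdiff.2 ⟨h, hiS⟩)
      rw [hzT i this, zero_mul]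
  have hnorm : ‖mulLin Φ z‖^2 = ∑ i ∈ R, z i * inner ℝ (col Φ i) (mulLin Φ z) := by
    rw [Finset.sum_subset (Finset.subset_univ R) (fun i _ hi => hzS i hi),
      ← real_inner_self_eq_norm_sq]
    conv_lhs => rw [show inner ℝ (mulLin Φ z) (mulLin Φ z) =
      inner ℝ (∑ i, z i • col Φ i) (mulLin Φ z) by rw [← mulLin_sum]]
    rw [sum_inner]
    simp [inner_smul_left]
  have hup : ‖mulLin Φ z‖^2 ≤ B * (√(R.card : ℝ) * ‖z‖) := by
    rw [hnorm]
    refine le_trans ?_ (mul_le_mul_of_nonneg_left hl1 hB0)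
    rw [Finset.mul_sum]
    apply Finset.sum_le_sum
    intro i hi
    refine (le_abs_self _).trans ?_
    rw [abs_mul, mul_comm]
    exact mul_le_mul_of_nonneg_right (hcorr i hi) (abs_nonneg _)
  have hlow : (1 - δ) * ‖z‖^2 ≤ ‖mulLin Φ z‖^2 := by
    refine (hRIP.1.2 z ?_).1
    have := Finset.card_le_card ((suppF_sub T z).2 hzT)
    omega
  have h1 : (1 - δ) * ‖z‖ ≤ B * √(R.card : ℝ) := by
    refine le_of_mul_le_mul_right ?_ hz0
    calc _ = (1 - δ) * ‖z‖^2 := by ring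
      _ ≤ _ := hlow.trans hup
      _ = _ := by ring
  have h2 : ‖z‖ * (1 - (√K + 1) * δ) ≤ √(R.card : ℝ) * (2 * s * ‖v‖) := by
    have : ‖z‖ * (δ * √(R.card : ℝ)) ≤ ‖z‖ * (δ * √K) := by gcongr
    rw [hB] at h1
    linarith
  have h3 : √(R.card : ℝ) * μ * (1 - (√K + 1) * δ) ≤ ‖z‖ * (1 - (√K + 1) * δ) :=
    mul_le_mul_of_nonneg_right hzlow hδ.le
  have h4 := mul_lt_mul_of_pos_left hnoise hN0
  linarith

/-- sufficient SNR condition for exact support recovery with OMP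
in `K` iterations. -/
theorem stmt0 {m n K : ℕ} (Φ : Matrix (Fin m) (Fin n) ℝ) (δ : ℝ)
    (x : Vec n) (v y : Vec m) (T : Finset (Fin n)) (hTne : T.Nonempty)
    (hsupp : suppF x = T) (hcard : T.card = K) (hK1 : 1 ≤ K)
    (hRIP : RIPConst Φ (K + 1) δ) (hδ : δ < 1 / (Real.sqrt K + 1))
    (hv : v ≠ 0) (hy : y = mulVec' Φ x + v)
    (hSNR : Real.sqrt (SNR Φ x v) >
      2 * Real.sqrt K * (1 + δ) /
        ((1 - (Real.sqrt K + 1) * δ) *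
          Real.sqrt ((T.inf' hTne fun j => |x j| ^ 2) / (‖x‖ ^ 2 / K))))
    (run : OMPRun Φ y K) :
    run.sets K = T := by
  have hδ0 : 0 ≤ δ := hRIP.1.1
  have hD : 0 < 1 - (√K + 1) * δ := by
    rw [lt_div_iff₀ (by positivity)] at hδ
    linarith
  have hxT : x ∈ suppSub T := (suppF_sub T x).1 hsupp.subset
  have hxne : ∀ i ∈ T, x i ≠ 0 := by
    intro i hi
    rw [← hsupp] at hi
    simpa [suppF] using hi
  set M := T.inf' hTne fun j => |x j| ^ 2 with hM
  have hM0 : 0 < M := by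
    rw [hM, Finset.lt_inf'_iff]
    intro i hi
    have := abs_pos.2 (hxne i hi)
    positivity
  have hx0 : 0 < ‖x‖ := by
    obtain ⟨i, hi⟩ := hTne
    rw [norm_pos_iff]
    rintro rfl
    exact hxne i hi (by simp)
  have hv0 : 0 < ‖v‖ := norm_pos_iff.2 hv
  have hmin : ∀ i ∈ T, √M ≤ |x i| := by
    intro i hi
    apply Real.sqrt_le_left (abs_nonneg _) |>.2
    exact Finset.inf'_le (fun j => |x j| ^ 2) hi
  have hμ : 0 < √M := Real.sqrt_pos.2 hM0
  have hK0 : 0 < √(K : ℝ) := Real.sqrt_pos.2 (by exact_mod_cast hK1)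
  have hnoise : 2 * √(1 + δ) * ‖v‖ < √M * (1 - (√K + 1) * δ) := by
    have hs0 : 0 < √(1 + δ) := Real.sqrt_pos.2 (by linarith)
    have hss : √(1 + δ) * √(1 + δ) = 1 + δ := Real.mul_self_sqrt (by linarith)
    have e1 : √(SNR Φ x v) ≤ √(1 + δ) * ‖x‖ / ‖v‖ := by
      rw [SNR, Real.sqrt_div (sq_nonneg _), Real.sqrt_sq (norm_nonneg _),
        Real.sqrt_sq (norm_nonneg _)]
      gcongr
      refine (sq_le_sq₀ (by positivity) (by positivity)).1 ?_
      rw [mul_pow, Real.sq_sqrt (by linarith)]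
      refine (hRIP.1.2 x ?_).2
      rw [hsupp]; omega
    have e2 : √(M / (‖x‖ ^ 2 / K)) = √M * √K / ‖x‖ := by
      rw [Real.sqrt_div hM0.le, Real.sqrt_div (sq_nonneg _), Real.sqrt_sq (norm_nonneg _)]
      field_simp
    rw [e2] at hSNR
    have e3 := lt_of_lt_of_le hSNR e1
    rw [div_lt_div_iff₀ (by positivity) hv0] at e3
    have e4 : √(1 + δ) * ‖x‖ * ((1 - (√K + 1) * δ) * (√M * √K / ‖x‖)) =
        (√(1 + δ) * √K) * (√M * (1 - (√K + 1) * δ)) := by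
      field_simp
    rw [e4] at e3
    refine lt_of_mul_lt_mul_left (a := √(1 + δ) * √K) ?_ (by positivity)
    calc _ = 2 * √K * (√(1 + δ) * √(1 + δ)) * ‖v‖ := by ring
      _ = 2 * √K * (1 + δ) * ‖v‖ := by rw [hss]
      _ < _ := e3
  rw [mulLin_apply] at hy
  have main : ∀ k, k ≤ K → run.sets k ⊆ T ∧ (run.sets k).card = k ∧
      run.est k ∈ suppSub (run.sets k) ∧ run.res k = y - mulLin Φ (run.est k) ∧
      ∀ i ∈ run.sets k, inner ℝ (col Φ i) (run.res k) = 0 := by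
    intro k
    induction k with
    | zero =>
      intro _
      simp [run.sets_zero, run.est_zero, run.res_zero]
    | succ k ih =>
      intro hk
      have hk' : k < K := hk
      obtain ⟨h1, h2, h3, h4, h5⟩ := ih hk'.le
      have hmem : run.idx (k+1) ∈ T := by
        refine step Φ δ √M x (run.est k) v (run.res k) (run.sets k) T hxT hcard hRIP hD hμ hmin
          hnoise ?_ h3 (h4.trans (congrArg (· - _) hy)) h5 _ ?_
        · refine Finset.ssubset_iff_subset_ne.2 ⟨h1, ?_⟩
          intro h
          rw [h] at h2
          omega
        · intro i hi
          have := run.idx_max k hk' i hi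
          rwa [dot_eq, dot_eq] at this
      have hsup := (suppF_sub _ _).1 (run.est_supp k hk')
      refine ⟨?_, ?_, hsup, ?_, ?_⟩
      · rw [run.sets_succ k hk']
        exact Finset.insert_subset hmem h1
      · rw [run.sets_succ k hk', Finset.card_insert_of_notMem (run.idx_not_mem k hk'), h2]
      · rw [run.res_succ k hk', mulLin_apply]
      · intro i hi
        apply orth_of_min
        intro t
        have := run.est_min k hk' (run.est (k+1) + t • EuclideanSpace.single i (1:ℝ))
          ((suppF_sub _ _).2 (Submodule.add_mem _ hsup
            (Submodule.smul_mem _ _ (single_mem hi))))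
        rw [run.res_succ k hk', sub_sub]
        rwa [mulLin_apply, mulLin_apply, map_add, map_smul, mulLin_single] at this
  obtain ⟨h1, h2, -⟩ := main K le_rfl
  exact Finset.eq_of_subset_of_card_le h1 (by omega)

end
end

section
/- For every integer K ≥ 1 and every m > K, there exist a matrix Φ ∈ ℝ^{m×m}, a K-sparse signal x ∈ ℝ^m with support T, and a noise vector v ≠ 0 with y = Φx + v, such that √SNR ≤ √K(1 + δ_{K+1}) / ((1 − √K·δ_{K+1}) · √MAR) and there is a run of OMP applied to (Φ, y) whose first selected index satisfies t^1 ∉ T; in particular, exact support recovery in K iterations fails for this run. (Hence the SNR bound √SNR > √K(1+δ_{K+1})/((1−√K δ_{K+1})√MAR) is necessary for the exact support recovery of all K-sparse signals with OMP.) -/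
noncomputable section
open Finset

theorem mulVec'_one {m : ℕ} (u : Vec m) : mulVec' (1 : Matrix (Fin m) (Fin m) ℝ) u = u := by
  ext i
  simp [mulVec', Matrix.one_apply]

theorem dot_col_one {m : ℕ} (i : Fin m) (u : Vec m) :
    dot (col (1 : Matrix (Fin m) (Fin m) ℝ) i) u = u i := by
  simp [dot, col, Matrix.one_apply]

/-- Indicator vector of the indices `a ≤ i < b`. -/
def indVec (m a b : ℕ) : Vec m := WithLp.toLp 2 fun i => if a ≤ i.1 ∧ i.1 < b then 1 else 0

theorem indVec_apply (m a b : ℕ) (i : Fin m) :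
    indVec m a b i = if a ≤ i.1 ∧ i.1 < b then 1 else 0 := rfl

theorem card_filt (m a b : ℕ) (h : b ≤ m) :
    (univ.filter fun i : Fin m => a ≤ i.1 ∧ i.1 < b).card = b - a := by
  rw [← Nat.card_Ico a b, ← Finset.card_map Fin.valEmbedding]
  congr 1
  ext j
  simp only [mem_map, mem_filter, mem_univ, true_and, Fin.valEmbedding_apply, mem_Ico]
  constructor
  · rintro ⟨i, hi, rfl⟩
    exact hi
  · intro hj
    exact ⟨⟨j, by omega⟩, hj, rfl⟩

theorem norm_indVec (m a b : ℕ) (h : b ≤ m) : ‖indVec m a b‖ ^ 2 = ((b - a : ℕ) : ℝ) := by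
  rw [EuclideanSpace.norm_sq_eq, ← card_filt m a b h, Finset.card_filter]
  push_cast
  refine Finset.sum_congr rfl fun i _ => ?_
  rw [indVec_apply]
  split_ifs <;> simp

theorem suppF_indVec (m a b : ℕ) :
    suppF (indVec m a b) = univ.filter fun i : Fin m => a ≤ i.1 ∧ i.1 < b := by
  ext i
  simp [suppF, indVec_apply]

/-- The failing run: indices are selected in increasing order. -/
def badRun (K m : ℕ) (hm : K < m) :
    OMPRun (1 : Matrix (Fin m) (Fin m) ℝ) (indVec m 0 (K + 1)) K where
  idx k := ⟨min (k - 1) K, by omega⟩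
  sets k := univ.filter fun i : Fin m => 0 ≤ i.1 ∧ i.1 < k
  est k := indVec m 0 k
  res k := indVec m 0 (K + 1) - indVec m 0 k
  sets_zero := by simp
  est_zero := by
    ext i
    simp [indVec_apply]
  res_zero := by
    ext i
    simp [indVec_apply]
  idx_not_mem := by
    intro k hk
    simp
    omega
  idx_max := by
    intro k hk i hi
    rw [dot_col_one, dot_col_one]
    have h : min k K = k := by omega
    simp at hi
    simp [indVec_apply, h, show ¬ i.1 < k by omega, show k < K + 1 by omega]
    split_ifs <;> simp
  sets_succ := by
    intro k hk
    ext i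
    simp [Fin.ext_iff]
    omega
  est_supp := by
    intro k hk
    rw [suppF_indVec]
  est_min := by
    intro k hk u hu
    rw [mulVec'_one, mulVec'_one, EuclideanSpace.norm_eq, EuclideanSpace.norm_eq]
    refine Real.sqrt_le_sqrt (Finset.sum_le_sum fun i _ => ?_)
    by_cases hi : i.1 < k + 1
    · simp [indVec_apply, hi, show i.1 < K + 1 by omega]
      positivity
    · have : u i = 0 := by
        by_contra h0
        have := @hu i (by simp [suppF, h0])
        simp at this
        omega
      simp [indVec_apply, hi, this]
  res_succ := by
    intro k hk
    rw [mulVec'_one]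

/-- necessity of the SNR bound: for every `K ≥ 1` and `m > K`
there is an instance satisfying the reversed SNR bound on which some run of
OMP picks a wrong index at the first iteration and fails exact recovery. -/
theorem stmt1 (K m : ℕ) (hK : 1 ≤ K) (hm : K < m) :
    ∃ (Φ : Matrix (Fin m) (Fin m) ℝ) (x v y : Vec m) (T : Finset (Fin m))
      (hTne : T.Nonempty) (δ : ℝ),
      suppF x = T ∧ T.card = K ∧ v ≠ 0 ∧ y = mulVec' Φ x + v ∧
      RIPConst Φ (K + 1) δ ∧
      Real.sqrt (SNR Φ x v) ≤
        Real.sqrt K * (1 + δ) /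
          ((1 - Real.sqrt K * δ) *
            Real.sqrt ((T.inf' hTne fun j => |x j| ^ 2) / (‖x‖ ^ 2 / K))) ∧
      ∃ run : OMPRun Φ y K, run.idx 1 ∉ T ∧ run.sets K ≠ T := by
  have hx : ‖indVec m 1 (K + 1)‖ ^ 2 = (K : ℝ) := by
    rw [norm_indVec _ _ _ (by omega)]
    simp
  have hv : ‖indVec m 0 1‖ ^ 2 = (1 : ℝ) := by
    rw [norm_indVec _ _ _ (by omega)]
    simp
  have hK0 : (K : ℝ) ≠ 0 := by positivity
  have hTc : (univ.filter fun i : Fin m => 1 ≤ i.1 ∧ i.1 < K + 1).card = K := by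
    rw [card_filt _ _ _ (by omega)]
    simp
  have hT : (univ.filter fun i : Fin m => 1 ≤ i.1 ∧ i.1 < K + 1).Nonempty :=
    ⟨⟨1, by omega⟩, by simp; omega⟩
  refine ⟨1, indVec m 1 (K + 1), indVec m 0 1, indVec m 0 (K + 1), _, hT, 0,
    suppF_indVec _ _ _, hTc, ?_, ?_, ?_, ?_, badRun K m hm, ?_, ?_⟩
  · intro h
    rw [h] at hv
    simp at hv
  · rw [mulVec'_one]
    ext i
    simp only [indVec_apply, PiLp.add_apply]
    by_cases h0 : i.1 = 0
    · simp [h0]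
    · simp [h0, show 1 ≤ i.1 by omega]
  · refine ⟨⟨le_rfl, fun u _ => ?_⟩, fun c hc => hc.1⟩
    rw [mulVec'_one]
    simp
  · have hinf : ((univ.filter fun i : Fin m => 1 ≤ i.1 ∧ i.1 < K + 1).inf' hT
        fun j => |indVec m 1 (K + 1) j| ^ 2) = 1 := by
      rw [← Finset.inf'_const hT (1 : ℝ)]
      refine Finset.inf'_congr hT rfl fun i hi => ?_
      rw [indVec_apply, if_pos (by simpa using hi)]
      simp
    rw [hinf, SNR, mulVec'_one, hx, hv, div_self hK0]
    simp
  · simp [badRun]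
  · intro h
    have h1 : (⟨0, by omega⟩ : Fin m) ∈ (badRun K m hm).sets K := by
      simp [badRun]
      omega
    rw [h] at h1
    simp at h1

end
end

section
/- There exists an absolute constant C > 0 with the following property. Let Φ ∈ ℝ^{m×n} have restricted isometry constant δ := δ_{2K} ∈ (0,1) of order 2K, let x ∈ ℝ^n be K-sparse with support T, |T| = K ≥ 1, set κ := max_{i,j∈T} |x_i|/|x_j|, and let y = Φx + v with v ≠ 0. If SNR ≥ κ²·δ^{−3/2}, then every run of K iterations of OMP applied to (Φ, y) recovers the support of x with error rate ρ_error := |T^K \ T| / K ≤ C·κ²·δ^{1/2}. -/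
noncomputable section
open Finset

lemma comb_aux {n : ℕ} (b : Fin n → ℝ) (T : Finset (Fin n)) (sets : ℕ → Finset (Fin n))
    (idx : ℕ → Fin n) (H : ℕ → ℝ) (j K : ℕ) (μ : ℝ)
    (h0 : sets 0 = ∅)
    (hidx : ∀ k < K, idx (k + 1) ∉ sets k)
    (hsucc : ∀ k < K, sets (k + 1) = insert (idx (k + 1)) (sets k))
    (hH : ∀ k, 0 ≤ H k)
    (hB : ∀ k < K, ∀ S ⊆ T \ sets k, j < S.card → ∃ i ∈ S, b i ≤ H k)
    (hm : ∀ i ∈ T, μ ≤ b i)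
    (hw : ∀ k < K, j < (T \ sets k).card) :
    ∀ k ≤ K, ∀ S' ⊆ T \ sets k, S'.card ≤ j → ∃ S ⊆ T, S.card ≤ j ∧
      ∑ i ∈ T \ S, b i + μ * ((sets k \ T).card : ℝ) ≤
        ∑ i ∈ (T \ sets k) \ S', b i + ∑ l ∈ range k, H l := by
  intro k
  induction k with
  | zero =>
    intro _ S' hS' hc
    refine ⟨S', fun i hi => (mem_sdiff.1 (hS' hi)).1, hc, ?_⟩
    simp [h0]
  | succ k ih =>
    intro hk S' hS' hc
    have hkK : k < K := hk
    have ih := ih hkK.le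
    rw [sum_range_succ]
    set t := idx (k + 1) with ht
    have hs := hsucc k hkK
    rw [← ht] at hs
    have hni : t ∉ sets k := hidx k hkK
    rw [hs] at hS' ⊢
    by_cases htT : t ∈ T
    · have e1 : insert t (sets k) \ T = sets k \ T := by
        ext i; simp only [mem_sdiff, mem_insert]
        constructor
        · rintro ⟨rfl | h, h2⟩
          · exact absurd htT h2
          · exact ⟨h, h2⟩
        · rintro ⟨h, h2⟩; exact ⟨Or.inr h, h2⟩
      have hsub : insert t S' ⊆ T \ sets k := by
        intro i hi
        rcases mem_insert.1 hi with rfl | hi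
        · exact mem_sdiff.2 ⟨htT, hni⟩
        · have := mem_sdiff.1 (hS' hi)
          exact mem_sdiff.2 ⟨this.1, fun h => this.2 (mem_insert_of_mem h)⟩
      have e2 : (T \ insert t (sets k)) \ S' = (T \ sets k) \ insert t S' := by
        ext i; simp only [mem_sdiff, mem_insert]; tauto
      rw [e1, e2]
      by_cases hcard : (insert t S').card ≤ j
      · obtain ⟨S, h1, h2, h3⟩ := ih _ hsub hcard
        exact ⟨S, h1, h2, by linarith [hH k]⟩
      · push Not at hcard
        obtain ⟨s, hs1, hs2⟩ := hB k hkK _ hsub hcard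
        have hc2 : ((insert t S').erase s).card ≤ j := by
          rw [card_erase_of_mem hs1]
          have := card_insert_le t S'
          omega
        obtain ⟨S, h1, h2, h3⟩ := ih _ ((erase_subset _ _).trans hsub) hc2
        refine ⟨S, h1, h2, ?_⟩
        have e3 : (T \ sets k) \ (insert t S').erase s
            = insert s ((T \ sets k) \ insert t S') := by
          have := hsub hs1
          ext i; simp only [mem_sdiff, mem_insert, mem_erase] at *
          by_cases his : i = s
          · subst his; tauto
          · tauto
        rw [e3, sum_insert (by simp [mem_sdiff, hs1])] at h3
        linarith
    · have e1 : insert t (sets k) \ T = insert t (sets k \ T) := by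
        ext i; simp only [mem_sdiff, mem_insert]
        constructor
        · tauto
        · rintro (rfl | h)
          · exact ⟨Or.inl rfl, htT⟩
          · tauto
      have e2 : T \ insert t (sets k) = T \ sets k := by
        ext i; simp only [mem_sdiff, mem_insert]
        constructor
        · tauto
        · rintro ⟨h1, h2⟩
          refine ⟨h1, ?_⟩
          rintro (rfl | h)
          · exact htT h1
          · exact h2 h
      rw [e2] at hS' ⊢
      rw [e1, card_insert_of_notMem (by simp [hni])]
      obtain ⟨S, h1, h2, h3⟩ := ih _ hS' hc
      obtain ⟨i, hi1, hi2⟩ := hB k hkK _ (Subset.refl _) (hw k hkK)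
      have := hm i (mem_sdiff.1 hi1).1
      refine ⟨S, h1, h2, ?_⟩
      push_cast
      linarith

lemma mulVec'_add {m n : ℕ} (Φ : Matrix (Fin m) (Fin n) ℝ) (u v : Vec n) :
    mulVec' Φ (u + v) = mulVec' Φ u + mulVec' Φ v := by
  ext i; simp [mulVec', mul_add, sum_add_distrib]

lemma mulVec'_smul {m n : ℕ} (Φ : Matrix (Fin m) (Fin n) ℝ) (c : ℝ) (u : Vec n) :
    mulVec' Φ (c • u) = c • mulVec' Φ u := by
  ext i; simp [mulVec', mul_sum, mul_left_comm]

lemma mulVec'_sub {m n : ℕ} (Φ : Matrix (Fin m) (Fin n) ℝ) (u v : Vec n) :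
    mulVec' Φ (u - v) = mulVec' Φ u - mulVec' Φ v := by
  ext i; simp [mulVec', mul_sub, sum_sub_distrib]

lemma mulVec'_single {m n : ℕ} (Φ : Matrix (Fin m) (Fin n) ℝ) (t : Fin n) :
    mulVec' Φ (EuclideanSpace.single t 1) = col Φ t := by
  ext i; simp [mulVec', col]

lemma dot_mulVec' {m n : ℕ} (Φ : Matrix (Fin m) (Fin n) ℝ) (q : Vec n) (w : Vec m) :
    inner ℝ (mulVec' Φ q) w = ∑ i, q i * dot (col Φ i) w := by
  rw [← dot_eq]
  simp only [dot, mulVec', col, sum_mul, mul_sum]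
  rw [sum_comm]
  refine sum_congr rfl fun i _ => sum_congr rfl fun j _ => by ring

lemma norm_sq_vec {n : ℕ} (u : Vec n) : ‖u‖ ^ 2 = ∑ i, u i ^ 2 := by
  rw [EuclideanSpace.norm_sq_eq]; simp

/-- The correlation estimate: `Φᵀ(Φ z + v)` is close to `z` on a small set. -/
lemma corr_aux {m n L : ℕ} (Φ : Matrix (Fin m) (Fin n) ℝ) (δ : ℝ) (hδ0 : 0 < δ) (hδ : δ ≤ 1)
    (hrip : ∀ u : Vec n, (suppF u).card ≤ L →
      (1 - δ) * ‖u‖ ^ 2 ≤ ‖mulVec' Φ u‖ ^ 2 ∧ ‖mulVec' Φ u‖ ^ 2 ≤ (1 + δ) * ‖u‖ ^ 2)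
    (z : Vec n) (U Γ : Finset (Fin n)) (hz : suppF z ⊆ U) (hU : U.card ≤ L) (hΓ : Γ ⊆ U)
    (v r : Vec m) (hr : r = mulVec' Φ z + v) :
    ∑ i ∈ Γ, (dot (col Φ i) r - z i) ^ 2 ≤ 2 * δ ^ 2 * ‖z‖ ^ 2 + 8 * ‖v‖ ^ 2 := by
  set q : Vec n := WithLp.toLp 2 fun i => if i ∈ Γ then dot (col Φ i) r - z i else 0 with hq
  have hqn : ‖q‖ ^ 2 = ∑ i ∈ Γ, (dot (col Φ i) r - z i) ^ 2 := by
    rw [norm_sq_vec]; simp [hq, ite_pow, sum_ite_mem]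
  have hqs : ∀ i, q i ≠ 0 → i ∈ U := by
    intro i hi
    by_contra h
    have h' : i ∉ Γ := fun h' => h (hΓ h')
    exact hi (by simp [hq, h'])
  have hzs : ∀ i, z i ≠ 0 → i ∈ U := fun i hi => hz (by simp [suppF, hi])
  have hsp : ∀ a b : ℝ, (suppF (a • q + b • z)).card ≤ L := by
    intro a b
    refine (card_le_card ?_).trans hU
    intro i hi
    by_contra h
    have h1 : q i = 0 := by by_contra h2; exact h (hqs i h2)
    have h3 : z i = 0 := by by_contra h2; exact h (hzs i h2)
    have hi := (mem_filter.1 hi).2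
    exact hi (by simp [h1, h3])
  have hinn : ‖q‖ ^ 2 = inner ℝ (mulVec' Φ q) r - inner ℝ q z := by
    rw [dot_mulVec', ← dot_eq, dot, ← sum_sub_distrib, norm_sq_vec]
    refine sum_congr rfl fun i _ => ?_
    by_cases hi : i ∈ Γ
    · have : q i = dot (col Φ i) r - z i := by simp [hq, hi]
      rw [this]; ring
    · have : q i = 0 := by simp [hq, hi]
      rw [this]; ring
  have h1 := (hrip _ (hsp 1 δ)).2
  have h2 := (hrip _ (hsp 1 (-δ))).1
  have h3 := (hrip _ (hsp 1 0)).2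
  simp only [one_smul, zero_smul, add_zero] at h1 h2 h3
  rw [mulVec'_add, mulVec'_smul, norm_add_sq_real, norm_add_sq_real, norm_smul, norm_smul,
    inner_smul_right, inner_smul_right, mul_pow, mul_pow, Real.norm_eq_abs, sq_abs] at h1 h2
  rw [hr, inner_add_right] at hinn
  have h4 := real_inner_le_norm (mulVec' Φ q) v
  rw [← hqn]
  set B := inner ℝ (mulVec' Φ q) (mulVec' Φ z)
  set I := inner ℝ q z
  have h5 : δ * (B - I) ≤ δ * ((‖q‖^2 + δ^2 * ‖z‖^2)/2) := by nlinarith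
  have h6 := le_of_mul_le_mul_left h5 hδ0
  nlinarith [sq_nonneg (‖mulVec' Φ q‖ - 4 * ‖v‖), sq_nonneg ‖q‖]


lemma norm_add_upper {m : ℕ} (a v : Vec m) (s : ℝ) (hs : 0 < s) :
    s * ‖a + v‖ ^ 2 ≤ s * (1 + s) * ‖a‖ ^ 2 + (1 + s) * ‖v‖ ^ 2 := by
  rw [norm_add_sq_real]
  have h := real_inner_le_norm a v
  nlinarith [sq_nonneg (s * ‖a‖ - ‖v‖)]

lemma norm_add_lower {m : ℕ} (a v : Vec m) (s : ℝ) (hs : 0 < s) :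
    s * (1 - s) * ‖a‖ ^ 2 - ‖v‖ ^ 2 ≤ s * ‖a + v‖ ^ 2 := by
  rw [norm_add_sq_real]
  have h := (abs_le.1 (abs_real_inner_le_norm a v)).1
  nlinarith [sq_nonneg (s * ‖a‖ - ‖v‖), mul_nonneg hs.le (sq_nonneg ‖v‖)]

section run
variable {m n K : ℕ} {Φ : Matrix (Fin m) (Fin n) ℝ} {y : Vec m}

lemma run_res (run : OMPRun Φ y K) : ∀ k ≤ K, run.res k = y - mulVec' Φ (run.est k) := by
  intro k hk
  cases k with
  | zero =>
    rw [run.res_zero, run.est_zero]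
    ext i; simp [mulVec']
  | succ k => exact run.res_succ k hk

lemma run_supp (run : OMPRun Φ y K) : ∀ k ≤ K, suppF (run.est k) ⊆ run.sets k := by
  intro k hk
  cases k with
  | zero => rw [run.est_zero]; intro i hi; simp [suppF] at hi
  | succ k => exact run.est_supp k hk

lemma run_card (run : OMPRun Φ y K) : ∀ k ≤ K, (run.sets k).card ≤ k := by
  intro k hk
  induction k with
  | zero => simp [run.sets_zero]
  | succ k ih =>
    rw [run.sets_succ k hk]
    have := card_insert_le (run.idx (k+1)) (run.sets k)
    have := ih (by omega)
    omega

lemma run_mono (run : OMPRun Φ y K) (k : ℕ) (hk : k ≤ K) : run.sets k ⊆ run.sets K := by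
  have : ∀ l ≤ K, k ≤ l → run.sets k ⊆ run.sets l := by
    intro l hl hkl
    induction l, hkl using Nat.le_induction with
    | base => exact Subset.refl _
    | succ l hkl ih =>
      rw [run.sets_succ l hl]
      exact (ih (by omega)).trans (subset_insert _ _)
  exact this K le_rfl hk

lemma run_step (run : OMPRun Φ y K) (δ : ℝ) (hδ0 : 0 < δ)
    (hrip : ∀ u : Vec n, (suppF u).card ≤ 2 * K →
      (1 - δ) * ‖u‖ ^ 2 ≤ ‖mulVec' Φ u‖ ^ 2 ∧ ‖mulVec' Φ u‖ ^ 2 ≤ (1 + δ) * ‖u‖ ^ 2)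
    (k : ℕ) (hk : k < K) :
    |dot (col Φ (run.idx (k + 1))) (run.res k)| ^ 2 ≤
      (1 + δ) * (‖run.res k‖ ^ 2 - ‖run.res (k + 1)‖ ^ 2) := by
  set t := run.idx (k + 1) with ht
  set c := dot (col Φ t) (run.res k) with hc
  have hcol : ‖col Φ t‖ ^ 2 ≤ 1 + δ := by
    have h := (hrip (EuclideanSpace.single t 1) (by
      have : suppF (EuclideanSpace.single t (1:ℝ)) ⊆ {t} := by
        intro i hi
        have hi := (mem_filter.1 hi).2
        by_contra h
        rw [mem_singleton] at h
        exact hi (by simp [h])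
      have := card_le_card this
      rw [card_singleton] at this
      omega)).2
    rw [mulVec'_single] at h
    simpa using h
  have h1 := run.est_min k hk (run.est k + (c / (1 + δ)) • EuclideanSpace.single t 1) (by
    intro i hi
    have hi := (mem_filter.1 hi).2
    rw [run.sets_succ k hk, mem_insert]
    by_contra h
    push Not at h
    have h2 : run.est k i = 0 := by
      by_contra h2
      exact h.2 (run_supp run k hk.le (by simp [suppF, h2]))
    have h3 : i ≠ t := h.1
    exact hi (by simp [h2, h3]))
  rw [← run.res_succ k hk, mulVec'_add, mulVec'_smul, mulVec'_single, ← sub_sub,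
    ← run_res run k hk.le] at h1
  have h2 := pow_le_pow_left₀ (norm_nonneg _) h1 2
  rw [norm_sub_sq_real, inner_smul_right, real_inner_comm, ← dot_eq, ← hc, norm_smul, mul_pow,
    Real.norm_eq_abs, sq_abs] at h2
  rw [sq_abs]
  have hp : 0 < 1 + δ := by linarith
  have h3 : (c / (1 + δ)) ^ 2 * ‖col Φ t‖ ^ 2 ≤ (c / (1 + δ)) ^ 2 * (1 + δ) :=
    mul_le_mul_of_nonneg_left hcol (sq_nonneg _)
  have h4 : c = (c / (1 + δ)) * (1 + δ) := by field_simp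
  set e := c / (1 + δ)
  rw [h4] at h2 ⊢
  have h5 : e ^ 2 * (1 + δ) ≤ ‖run.res k‖ ^ 2 - ‖run.res (k + 1)‖ ^ 2 := by nlinarith
  nlinarith

end run

set_option maxHeartbeats 2000000 in
lemma core {m n K : ℕ} (Φ : Matrix (Fin m) (Fin n) ℝ) (s : ℝ) (hs0 : 0 < s) (hs : s ≤ 1 / 2)
    (hrip : ∀ u : Vec n, (suppF u).card ≤ 2 * K →
      (1 - s ^ 2) * ‖u‖ ^ 2 ≤ ‖mulVec' Φ u‖ ^ 2 ∧ ‖mulVec' Φ u‖ ^ 2 ≤ (1 + s ^ 2) * ‖u‖ ^ 2)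
    (x : Vec n) (v y : Vec m) (T : Finset (Fin n)) (M μ : ℝ)
    (hT : suppF x = T) (hK : T.card = K) (hy : y = mulVec' Φ x + v)
    (hM : ∀ i ∈ T, |x i| ≤ M) (hMpos : 0 < M) (hμ0 : 0 < μ) (hμ : ∀ i ∈ T, μ ≤ |x i|)
    (hμM : μ ≤ M)
    (hv : ‖v‖ ^ 2 ≤ s ^ 3 * ‖mulVec' Φ x‖ ^ 2) (run : OMPRun Φ y K) :
    μ ^ 2 * ((run.sets K \ T).card : ℝ) ≤ 100 * s * (K * M ^ 2) := by
  have hx0 : ∀ i, i ∉ T → x i = 0 := by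
    intro i hi
    by_contra h
    exact hi (hT ▸ by simp [suppF, h])
  have hX : ‖x‖ ^ 2 = ∑ i ∈ T, x i ^ 2 := by
    rw [norm_sq_vec]
    refine (sum_subset (subset_univ T) fun i _ hi => by simp [hx0 i hi]).symm
  have hb : ∀ i ∈ T, x i ^ 2 ≤ M ^ 2 := fun i hi => by
    rw [← sq_abs]; exact pow_le_pow_left₀ (abs_nonneg _) (hM i hi) 2
  set A : ℝ := K * M ^ 2 with hA
  have hA0 : 0 ≤ A := by positivity
  have hXA : ‖x‖ ^ 2 ≤ A := by
    rw [hX]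
    refine (sum_le_sum hb).trans ?_
    simp [hK, hA]
  have hs2 : s ^ 2 ≤ s / 2 := by nlinarith
  have hs3 : s ^ 3 ≤ s ^ 2 / 2 := by nlinarith [sq_nonneg s]
  have hs2p : 0 < s ^ 2 := by positivity
  have hs3p : 0 < s ^ 3 := by positivity
  have hxr := hrip x (by rw [hT]; omega)
  have hPx : ‖mulVec' Φ x‖ ^ 2 ≤ 2 * A := by nlinarith [sq_nonneg ‖x‖]
  have hv' : ‖v‖ ^ 2 ≤ 2 * s ^ 3 * A := by nlinarith
  have hv4 : ‖v‖ ^ 2 ≤ A / 4 := by nlinarith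
  have hyA : ‖y‖ ^ 2 ≤ 5 * A := by
    have := norm_add_upper (mulVec' Φ x) v 1 one_pos
    rw [← hy] at this
    linarith
  -- energy is decreasing
  have hstep := run_step run (s ^ 2) hs2p hrip
  have hdec : ∀ k ≤ K, ‖run.res k‖ ^ 2 ≤ ‖y‖ ^ 2 := by
    intro k
    induction k with
    | zero => intro _; rw [run.res_zero]
    | succ k ih =>
      intro hk
      have h1 := hstep k hk
      have h2 : 0 ≤ (1 + s ^ 2) * (‖run.res k‖ ^ 2 - ‖run.res (k + 1)‖ ^ 2) :=
        le_trans (by positivity) h1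
      have h3 := nonneg_of_mul_nonneg_right h2 (by positivity)
      linarith [ih (by omega)]
  have hres : ∀ k ≤ K, run.res k = mulVec' Φ (x - run.est k) + v := by
    intro k hk
    have e : y - mulVec' Φ (run.est k) = mulVec' Φ x + v - mulVec' Φ (run.est k) :=
      congrArg (fun w => w - mulVec' Φ (run.est k)) hy
    rw [run_res run k hk, e, mulVec'_sub]; abel
  have hzsup : ∀ k ≤ K, suppF (x - run.est k) ⊆ T ∪ run.sets k := by
    intro k hk i hi
    have hi := (mem_filter.1 hi).2
    rw [mem_union]
    by_contra h
    push Not at h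
    have h2 : run.est k i = 0 := by
      by_contra h2
      exact h.2 (run_supp run k hk (by simp [suppF, h2]))
    exact hi (by simp [h2, hx0 i h.1])
  have hUc : ∀ k ≤ K, (T ∪ run.sets k).card ≤ 2 * K := by
    intro k hk
    have := card_union_le T (run.sets k)
    have := run_card run k hk
    omega
  have hzr : ∀ k ≤ K, (1 - s ^ 2) * ‖x - run.est k‖ ^ 2 ≤ ‖mulVec' Φ (x - run.est k)‖ ^ 2 :=
    fun k hk => (hrip _ ((card_le_card (hzsup k hk)).trans (hUc k hk))).1
  have hz : ∀ k ≤ K, ‖x - run.est k‖ ^ 2 ≤ 16 * A := by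
    intro k hk
    have h1 := hzr k hk
    have h2 := norm_add_upper (run.res k) (-v) 1 one_pos
    rw [norm_neg, hres k hk, add_neg_cancel_right, ← hres k hk] at h2
    have h3 := hdec k hk
    nlinarith [sq_nonneg ‖x - run.est k‖]
  have hest0 : ∀ k ≤ K, ∀ i ∈ T \ run.sets k, (x - run.est k) i = x i := by
    intro k hk i hi
    have h2 : run.est k i = 0 := by
      by_contra h2
      exact (mem_sdiff.1 hi).2 (run_supp run k hk (by simp [suppF, h2]))
    simp [h2]
  have hcorr : ∀ k ≤ K, ∑ i ∈ T \ run.sets k, (dot (col Φ i) (run.res k) - x i) ^ 2 ≤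
      32 * s ^ 3 * A := by
    intro k hk
    have h := corr_aux Φ (s ^ 2) hs2p (by nlinarith) hrip (x - run.est k) (T ∪ run.sets k)
      (T \ run.sets k) (hzsup k hk) (hUc k hk) (sdiff_subset.trans subset_union_left) v _
      (hres k hk)
    rw [sum_congr rfl fun i hi => by rw [hest0 k hk i hi]] at h
    have h1 := hz k hk
    have h2 : (s ^ 2) ^ 2 * ‖x - run.est k‖ ^ 2 ≤ (s ^ 3 / 2) * (16 * A) := by
      apply mul_le_mul _ h1 (sq_nonneg _) (by positivity)
      nlinarith
    linarith
  set g : ℕ → ℝ := fun k => |dot (col Φ (run.idx (k + 1))) (run.res k)| with hg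
  set H : ℕ → ℝ := fun k => (g k + s * M) ^ 2 with hH
  set j : ℕ := ⌊32 * s * K⌋₊ with hj
  have hjle : (j : ℝ) ≤ 32 * s * K := Nat.floor_le (by positivity)
  have hB : ∀ k < K, ∀ S ⊆ T \ run.sets k, j < S.card → ∃ i ∈ S, x i ^ 2 ≤ H k := by
    intro k hk S hS hc
    by_contra hcon
    push Not at hcon
    have h1 : ∀ i ∈ S, s ^ 2 * M ^ 2 ≤ (dot (col Φ i) (run.res k) - x i) ^ 2 := by
      intro i hi
      have h2 := hcon i hi
      have h3 := run.idx_max k hk i (mem_sdiff.1 (hS hi)).2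
      have h4 : g k + s * M < |x i| := by
        rw [← sq_abs] at h2
        exact lt_of_pow_lt_pow_left₀ 2 (abs_nonneg _) h2
      have h5 := abs_sub_abs_le_abs_sub (x i) (dot (col Φ i) (run.res k))
      have h6 : s * M ≤ |x i - dot (col Φ i) (run.res k)| := by
        simp only [hg] at h4
        linarith
      have h7 := pow_le_pow_left₀ (by positivity) h6 2
      rw [sq_abs] at h7
      nlinarith
    have h2 : (S.card : ℝ) * (s ^ 2 * M ^ 2) ≤ 32 * s ^ 3 * A := by
      refine le_trans ?_ (hcorr k hk.le)
      refine le_trans ?_ (sum_le_sum_of_subset_of_nonneg hS fun _ _ _ => sq_nonneg _)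
      rw [← nsmul_eq_mul]
      exact card_nsmul_le_sum _ _ _ h1
    have h3 : 32 * s * K < S.card := (Nat.floor_lt' (by omega)).1 hc
    have h4 := mul_lt_mul_of_pos_right h3 (show 0 < s ^ 2 * M ^ 2 by positivity)
    rw [hA] at h2
    nlinarith
  -- number of missed indices
  have hwle : (run.sets K \ T).card ≤ (T \ run.sets K).card := by
    have h1 := card_sdiff_add_card_inter (run.sets K) T
    have h2 := card_sdiff_add_card_inter T (run.sets K)
    rw [inter_comm] at h2
    have := run_card run K le_rfl
    omega
  by_cases hjw : (run.sets K \ T).card ≤ j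
  · have h1 : ((run.sets K \ T).card : ℝ) ≤ 32 * s * K := le_trans (by exact_mod_cast hjw) hjle
    have h2 : μ ^ 2 ≤ M ^ 2 := pow_le_pow_left₀ hμ0.le hμM 2
    have h3 := mul_le_mul h2 h1 (by positivity) (by positivity)
    have : 0 ≤ s * A := by positivity
    rw [hA] at this ⊢
    nlinarith
  push Not at hjw
  obtain ⟨S, hST, hSc, hfin⟩ := comb_aux (fun i => x i ^ 2) T run.sets run.idx H j K (μ ^ 2)
    run.sets_zero run.idx_not_mem run.sets_succ (fun k => sq_nonneg _) hB
    (fun i hi => by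
      rw [← sq_abs (x i)]; exact pow_le_pow_left₀ hμ0.le (hμ i hi) 2)
    (fun k hk => lt_of_lt_of_le (hjw.trans_le hwle)
      (card_le_card (sdiff_subset_sdiff (Subset.refl _) (run_mono run k hk.le))))
    K le_rfl ∅ (by simp) (by simp)
  rw [sdiff_empty] at hfin
  have hS2 : ‖x‖ ^ 2 - 32 * s * A ≤ ∑ i ∈ T \ S, x i ^ 2 := by
    have h1 := sum_sdiff hST (f := fun i => x i ^ 2)
    have h2 : ∑ i ∈ S, x i ^ 2 ≤ S.card * M ^ 2 := by
      rw [← nsmul_eq_mul]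
      exact sum_le_card_nsmul _ _ _ fun i hi => hb i (hST hi)
    have h3 : (S.card : ℝ) ≤ 32 * s * K := le_trans (by exact_mod_cast hSc) hjle
    have h4 := mul_le_mul_of_nonneg_right h3 (sq_nonneg M)
    rw [hX, hA]
    linarith
  set XG := ∑ i ∈ T \ run.sets K, x i ^ 2 with hXG
  have hXG0 : 0 ≤ XG := sum_nonneg fun _ _ => sq_nonneg _
  have hXGle : XG ≤ ‖x‖ ^ 2 := by
    rw [hX]; exact sum_le_sum_of_subset_of_nonneg sdiff_subset fun _ _ _ => sq_nonneg _
  have hXGz : XG ≤ ‖x - run.est K‖ ^ 2 := by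
    have e : XG = ∑ i ∈ T \ run.sets K, (x - run.est K) i ^ 2 :=
      sum_congr rfl fun i hi => by rw [hest0 K le_rfl i hi]
    rw [norm_sq_vec, e]
    exact sum_le_sum_of_subset_of_nonneg (subset_univ _) fun _ _ _ => sq_nonneg _
  -- energy sums
  have hG : ∑ l ∈ range K, g l ^ 2 ≤ (1 + s ^ 2) * (‖y‖ ^ 2 - ‖run.res K‖ ^ 2) := by
    have h1 := sum_le_sum fun l (hl : l ∈ range K) => hstep l (mem_range.1 hl)
    rw [← mul_sum, sum_range_sub' (fun l => ‖run.res l‖ ^ 2), run.res_zero] at h1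
    exact h1
  have hHs : ∑ l ∈ range K, H l ≤ (1 + s) * ∑ l ∈ range K, g l ^ 2 + 2 * s * A := by
    have h1 : ∀ l ∈ range K, H l ≤ (1 + s) * g l ^ 2 + 2 * s * M ^ 2 := by
      intro l _
      simp only [hH]
      have : 0 ≤ s * (g l - M) ^ 2 := by positivity
      have : s ^ 2 * M ^ 2 ≤ s / 2 * M ^ 2 := mul_le_mul_of_nonneg_right hs2 (sq_nonneg _)
      nlinarith [sq_nonneg M]
    refine (sum_le_sum h1).trans ?_
    rw [sum_add_distrib, ← mul_sum, sum_const, card_range, nsmul_eq_mul, hA]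
    apply le_of_eq; ring
  have hE0 : ‖y‖ ^ 2 ≤ ‖x‖ ^ 2 + 5 * s * A := by
    have h1 := norm_add_upper (mulVec' Φ x) v s hs0
    rw [← hy] at h1
    have h2 : s * ‖y‖ ^ 2 ≤ s * ((1 + s) * ((1 + s ^ 2) * ‖x‖ ^ 2) + (1 + s) * (2 * s ^ 2 * A)) := by
      have h3 := mul_le_mul_of_nonneg_left hxr.2 (show 0 ≤ s * (1 + s) by positivity)
      have h4 := mul_le_mul_of_nonneg_left hv' (show 0 ≤ (1 + s) by positivity)
      linarith
    have h5 := le_of_mul_le_mul_left h2 hs0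
    have h6 : (s + s ^ 2 + s ^ 3) * ‖x‖ ^ 2 ≤ (2 * s) * A :=
      mul_le_mul (by linarith) hXA (sq_nonneg _) (by positivity)
    have h7 : (2 * s ^ 2 + 2 * s ^ 3) * A ≤ (3 * s) * A :=
      mul_le_mul_of_nonneg_right (by linarith) hA0
    linarith
  have hEK : XG - 4 * s * A ≤ ‖run.res K‖ ^ 2 := by
    have h1 := norm_add_lower (mulVec' Φ (x - run.est K)) v s hs0
    rw [← hres K le_rfl] at h1
    have h2 : s * ((1 - s) * ((1 - s ^ 2) * XG) - 2 * s ^ 2 * A) ≤ s * ‖run.res K‖ ^ 2 := by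
      have h0 := mul_le_mul_of_nonneg_left hXGz (show 0 ≤ 1 - s ^ 2 by linarith)
      have h3 := mul_le_mul_of_nonneg_left (h0.trans (hzr K le_rfl))
        (show 0 ≤ s * (1 - s) from mul_nonneg hs0.le (by linarith))
      linarith
    have h5 := le_of_mul_le_mul_left h2 hs0
    have h6 : (s + s ^ 2 - s ^ 3) * XG ≤ (2 * s) * A :=
      mul_le_mul (by linarith) (hXGle.trans hXA) hXG0 (by positivity)
    have h7 : (2 * s ^ 2) * A ≤ (2 * s) * A :=
      mul_le_mul_of_nonneg_right (by linarith) hA0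
    linarith
  have hD0 : 0 ≤ ‖y‖ ^ 2 - ‖run.res K‖ ^ 2 := by linarith [hdec K le_rfl]
  have hD1 : ‖y‖ ^ 2 - ‖run.res K‖ ^ 2 ≤ 5 * A := by linarith [sq_nonneg ‖run.res K‖]
  set D := ‖y‖ ^ 2 - ‖run.res K‖ ^ 2 with hD
  have hG2 := mul_le_mul_of_nonneg_left hG (show 0 ≤ 1 + s by positivity)
  have h6 : (s + s ^ 2 + s ^ 3) * D ≤ (2 * s) * (5 * A) :=
    mul_le_mul (by linarith) hD1 hD0 (by positivity)
  have : 0 ≤ s * A := by positivity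
  linarith

/-- approximate support recovery with constant SNR: there is an
absolute constant `C > 0` such that if `SNR ≥ κ² δ^{-3/2}` then every run of
`K` iterations of OMP has error rate `|T^K \ T|/K ≤ C κ² δ^{1/2}`. -/
theorem stmt3 : ∃ C : ℝ, 0 < C ∧
    ∀ (m n K : ℕ) (Φ : Matrix (Fin m) (Fin n) ℝ) (δ : ℝ) (x : Vec n) (v y : Vec m)
      (T : Finset (Fin n)) (hTne : T.Nonempty),
      suppF x = T → T.card = K → 1 ≤ K →
      RIPConst Φ (2 * K) δ → 0 < δ → δ < 1 →
      v ≠ 0 → y = mulVec' Φ x + v →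
      SNR Φ x v ≥
        (((T ×ˢ T).sup' (hTne.product hTne) fun p => |x p.1| / |x p.2|)) ^ 2
          * δ ^ (-(3 : ℝ) / 2) →
      ∀ run : OMPRun Φ y K,
        ((run.sets K \ T).card : ℝ) / K ≤
          C * (((T ×ˢ T).sup' (hTne.product hTne) fun p => |x p.1| / |x p.2|)) ^ 2
            * δ ^ ((1 : ℝ) / 2) := by
  refine ⟨100, by norm_num, ?_⟩
  intro m n K Φ δ x v y T hTne hT hK hK1 hR hδ0 hδ1 hv0 hy hsnr run
  set κ := (T ×ˢ T).sup' (hTne.product hTne) fun p => |x p.1| / |x p.2| with hκ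
  obtain ⟨i0, hi0, hmax⟩ := exists_max_image T (fun i => |x i|) hTne
  obtain ⟨j0, hj0, hmin⟩ := exists_min_image T (fun i => |x i|) hTne
  have hpos : ∀ i ∈ T, 0 < |x i| := by
    intro i hi
    rw [← hT] at hi
    exact abs_pos.2 (mem_filter.1 hi).2
  set M := |x i0| with hM
  set μ := |x j0| with hμ
  have hMp : 0 < M := hpos i0 hi0
  have hμp : 0 < μ := hpos j0 hj0
  have hμM : μ ≤ M := hmin i0 hi0
  have hκM : M / μ ≤ κ :=
    le_sup' (f := fun p : Fin n × Fin n => |x p.1| / |x p.2|) (b := (i0, j0))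
      (mem_product.2 ⟨hi0, hj0⟩)
  have h1M : 1 ≤ M / μ := (one_le_div hμp).2 hμM
  have hκ1 : 1 ≤ κ := h1M.trans hκM
  have hκ2 : 1 ≤ κ ^ 2 := one_le_pow₀ hκ1
  have hKp : (0 : ℝ) < K := by exact_mod_cast hK1
  obtain ⟨s, hs⟩ : ∃ s, s = δ ^ ((1 : ℝ) / 2) := ⟨_, rfl⟩
  have hs0 : 0 < s := by rw [hs]; positivity
  have hs2 : s ^ 2 = δ := by
    rw [hs, ← Real.rpow_natCast, ← Real.rpow_mul hδ0.le]; norm_num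
  have hs3 : δ ^ (-(3 : ℝ) / 2) = (s ^ 3)⁻¹ := by
    rw [hs, ← Real.rpow_natCast, ← Real.rpow_mul hδ0.le, ← Real.rpow_neg hδ0.le]; norm_num
  rw [← hs]
  rw [hs3] at hsnr
  have hcard : ((run.sets K \ T).card : ℝ) ≤ K := by
    have h1 := card_le_card (sdiff_subset : run.sets K \ T ⊆ run.sets K)
    exact_mod_cast h1.trans (run_card run K le_rfl)
  rw [div_le_iff₀ hKp]
  by_cases hsh : s ≤ 1 / 2
  · have hvp : 0 < ‖v‖ ^ 2 := by positivity
    have hv : ‖v‖ ^ 2 ≤ s ^ 3 * ‖mulVec' Φ x‖ ^ 2 := by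
      have hs3p : 0 < s ^ 3 := by positivity
      have h1 : (s ^ 3)⁻¹ ≤ ‖mulVec' Φ x‖ ^ 2 / ‖v‖ ^ 2 := by
        refine le_trans ?_ hsnr
        exact le_mul_of_one_le_left (by positivity) hκ2
      rw [le_div_iff₀ hvp, inv_mul_le_iff₀ hs3p] at h1
      exact h1
    have hrip := hR.1.2
    rw [← hs2] at hrip
    have h := core Φ s hs0 hsh hrip x v y T M μ hT hK hy hmax hMp hμp hmin hμM hv run
    have h2 : ((run.sets K \ T).card : ℝ) ≤ 100 * (M / μ) ^ 2 * s * K := by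
      have e : 100 * (M / μ) ^ 2 * s * K = (100 * s * (K * M ^ 2)) / μ ^ 2 := by
        field_simp
      rw [e, le_div_iff₀ (by positivity)]
      linarith
    have h3 : (M / μ) ^ 2 ≤ κ ^ 2 := pow_le_pow_left₀ (by positivity) hκM 2
    refine h2.trans ?_
    gcongr
  · push Not at hsh
    refine hcard.trans (le_mul_of_one_le_left hKp.le ?_)
    nlinarith


end
end

section
/- Let Φ ∈ ℝ^{m×n} have restricted isometry constant δ_1 < 1 of order 1 and let y ∈ ℝ^m. Then for every run of OMP applied to (Φ, y) and every integer k ≥ 0 with k + 1 ≤ n, the residuals satisfy ‖r^k‖₂² − ‖r^{k+1}‖₂² ≥ ‖Φᵀ r^k‖_∞² / (1 + δ_1). -/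
noncomputable section
open Finset

lemma key_step {m n : ℕ} (Φ : Matrix (Fin m) (Fin n) ℝ) (δ1 : ℝ)
    (hRIP : RIPConst Φ 1 δ1) (y : Vec m) (x : Vec n) (i : Fin n) (S : Finset (Fin n))
    (hx : suppF x ⊆ S) (hi : i ∈ S) (r' : Vec m)
    (hmin : ∀ u : Vec n, suppF u ⊆ S → ‖r'‖ ≤ ‖y - mulVec' Φ u‖) :
    (dot (col Φ i) (y - mulVec' Φ x)) ^ 2 / (1 + δ1) ≤
      ‖y - mulVec' Φ x‖ ^ 2 - ‖r'‖ ^ 2 := by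
  obtain ⟨⟨h0, hr⟩, -⟩ := hRIP
  have hcol : ‖col Φ i‖ ^ 2 ≤ 1 + δ1 := by
    have h := (hr (EuclideanSpace.single i (1 : ℝ)) (by
      have : suppF (EuclideanSpace.single i (1 : ℝ)) ⊆ {i} := by
        intro j hj
        simp [suppF] at hj
        simp [hj]
      simpa using Finset.card_le_card this)).2
    have e : mulVec' Φ (EuclideanSpace.single i (1 : ℝ)) = col Φ i := by
      ext j
      simp [mulVec', col, Pi.single_apply]
    rw [e] at h
    simpa using h
  set r := y - mulVec' Φ x with hrdef
  set d := dot (col Φ i) r with hd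
  have hdot : d = inner ℝ r (col Φ i) := by
    simp [hd, dot, PiLp.inner_apply]
  have hp : 0 < 1 + δ1 := by linarith
  set c := d / (1 + δ1) with hc
  have e : y - mulVec' Φ (x + c • EuclideanSpace.single i (1 : ℝ)) = r - c • col Φ i := by
    ext j
    simp [hrdef, mulVec', col, mul_add, Finset.sum_add_distrib, Pi.single_apply]
    ring
  have hs : suppF (x + c • EuclideanSpace.single i (1 : ℝ)) ⊆ S := by
    intro j hj
    by_cases hji : j = i
    · rw [hji]; exact hi
    · apply hx
      simpa [suppF, hji] using hj
  have h1 := hmin _ hs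
  rw [e] at h1
  have h2 : ‖r'‖ ^ 2 ≤ ‖r - c • col Φ i‖ ^ 2 := by gcongr
  rw [norm_sub_sq_real, inner_smul_right, ← hdot, norm_smul, mul_pow, Real.norm_eq_abs,
    sq_abs] at h2
  have h3 : c ^ 2 * ‖col Φ i‖ ^ 2 ≤ c ^ 2 * (1 + δ1) := by gcongr
  have h4 : c ^ 2 * (1 + δ1) = c * d := by rw [hc]; field_simp
  have h5 : d ^ 2 / (1 + δ1) = c * d := by rw [hc]; ring
  linarith

/-- the residual power difference of OMP satisfies
`‖r^k‖² − ‖r^{k+1}‖² ≥ ‖Φᵀ r^k‖_∞² / (1 + δ₁)`. -/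
theorem stmt8 {m n : ℕ} (Φ : Matrix (Fin m) (Fin n) ℝ) (δ1 : ℝ)
    (hRIP : RIPConst Φ 1 δ1) (hδ : δ1 < 1) (y : Vec m)
    (N : ℕ) (run : OMPRun Φ y N) (k : ℕ) (hk : k + 1 ≤ n) (hkN : k + 1 ≤ N) :
    ‖dualVec Φ (run.res k)‖ ^ 2 / (1 + δ1) ≤
      ‖run.res k‖ ^ 2 - ‖run.res (k + 1)‖ ^ 2 := by
  have hδ0 : 0 < 1 + δ1 := by linarith [hRIP.1.1]
  have hk' : k < N := by omega
  have hres : run.res k = y - mulVec' Φ (run.est k) := by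
    cases k with
    | zero =>
      rw [run.res_zero, run.est_zero]
      ext j
      simp [mulVec']
    | succ k => exact run.res_succ k (by omega)
  have hsupp : suppF (run.est k) ⊆ run.sets k := by
    cases k with
    | zero => simp [run.est_zero, suppF]
    | succ k => exact run.est_supp k (by omega)
  have hsub : run.sets k ⊆ run.sets (k + 1) := by
    rw [run.sets_succ k hk']; exact Finset.subset_insert _ _
  have hmain := key_step Φ δ1 hRIP y (run.est k) (run.idx (k + 1)) (run.sets (k + 1))
    (hsupp.trans hsub) (by rw [run.sets_succ k hk']; exact Finset.mem_insert_self _ _)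
    (run.res (k + 1)) (by
      intro u hu
      rw [run.res_succ k hk']
      exact run.est_min k hk' u hu)
  rw [← hres] at hmain
  refine le_trans ?_ hmain
  rw [← sq_abs (dot _ _)]
  gcongr
  rw [pi_norm_le_iff_of_nonneg (abs_nonneg _)]
  intro i
  rw [Real.norm_eq_abs]
  by_cases hi : i ∈ run.sets k
  · have hz : dot (col Φ i) (run.res k) = 0 := by
      have h := key_step Φ δ1 hRIP y (run.est k) i (run.sets k) hsupp hi (run.res k) (by
        cases k with
        | zero => simp [run.sets_zero] at hi
        | succ k =>
          intro u hu
          rw [run.res_succ k (by omega)]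
          exact run.est_min k (by omega) u hu)
      rw [← hres, sub_self, div_le_iff₀ hδ0, zero_mul] at h
      exact pow_eq_zero_iff (two_ne_zero) |>.1 (le_antisymm h (sq_nonneg _))
    simp [dualVec, hz]
  · exact run.idx_max k hk' i hi

end
end
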